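/- Let k → A → H → B → k be an exact sequence of cosemisimple Hopf algebras. The map from Ĥ to finite subsets of B̂ sending a simple H-comodule V to const(V), the set of its simple B-constituents, has as its range exactly the equivalence classes of ∼_B, and its fibers are exactly the equivalence classes of ∼_H. -/

import Mathlib

/- Common infrastructure: right comodules over coalgebras, simplicity,
cosemisimplicity, subcoalgebras, adjoint coactions, normality, etc. -/

open TensorProduct

universe u

namespace QG

variable (k : Type u) [Field k]

section Coalg

variable (C : Type u) [AddCommGroup C] [Module k C] [Coalgebra k C]

/-- `ρ : V →ₗ[k] V ⊗[k] C` is a (coassociative, counital) right coaction. -/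
structure IsComod {V : Type u} [AddCommGroup V] [Module k V]
    (ρ : V →ₗ[k] V ⊗[k] C) : Prop where
  coassoc : ∀ v : V, ρ.rTensor C (ρ v) =
    (TensorProduct.assoc k V C C).symm.toLinearMap
      ((Coalgebra.comul (R := k) (A := C)).lTensor V (ρ v))
  counit : ∀ v : V, (TensorProduct.rid k V)
      ((Coalgebra.counit (R := k) (A := C)).lTensor V (ρ v)) = v

/-- A submodule `U ≤ V` is a subcomodule if the coaction restricts to it,
i.e. maps `U` into the image of `U ⊗ C` in `V ⊗ C`. -/
def IsSubcomod {V : Type u} [AddCommGroup V] [Module k V]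
    (ρ : V →ₗ[k] V ⊗[k] C) (U : Submodule k V) : Prop :=
  ∀ u ∈ U, ρ u ∈ LinearMap.range ((U.subtype).rTensor C)

/-- A simple subcomodule: a nonzero subcomodule with no nonzero proper
subcomodules below it. -/
def IsSimpleSubcomod {V : Type u} [AddCommGroup V] [Module k V]
    (ρ : V →ₗ[k] V ⊗[k] C) (U : Submodule k V) : Prop :=
  IsSubcomod k C ρ U ∧ U ≠ ⊥ ∧
    ∀ U' : Submodule k V, U' ≤ U → IsSubcomod k C ρ U' → U' = ⊥ ∨ U' = U

/-- A comodule is simple if it is simple as a subcomodule of itself. -/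
def IsSimpleComod {V : Type u} [AddCommGroup V] [Module k V]
    (ρ : V →ₗ[k] V ⊗[k] C) : Prop :=
  IsSimpleSubcomod k C ρ ⊤

/-- Morphisms of right `C`-comodules. -/
def IsComodHom {V W : Type u} [AddCommGroup V] [Module k V]
    [AddCommGroup W] [Module k W]
    (ρV : V →ₗ[k] V ⊗[k] C) (ρW : W →ₗ[k] W ⊗[k] C) (f : V →ₗ[k] W) : Prop :=
  ρW ∘ₗ f = (f.rTensor C) ∘ₗ ρV

/-- `C` is cosemisimple: every right `C`-comodule is an (internal) direct sum
of simple subcomodules. -/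
def IsCosemisimple : Prop :=
  ∀ (V : Type u) [AddCommGroup V] [Module k V]
    (ρ : V →ₗ[k] V ⊗[k] C), IsComod k C ρ →
    ∃ (ι : Type u) (U : ι → Submodule k V),
      (∀ i, IsSimpleSubcomod k C ρ (U i)) ∧
      iSupIndep U ∧ (⨆ i, U i) = ⊤

/-- Subcoalgebras of `C`, as submodules. -/
def IsSubcoalgebra (D : Submodule k C) : Prop :=
  ∀ x ∈ D, Coalgebra.comul (R := k) x ∈
    LinearMap.range (TensorProduct.map D.subtype D.subtype)

/-- Simple subcoalgebras: nonzero ones with no nonzero proper subcoalgebras. -/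
def IsSimpleSubcoalgebra (D : Submodule k C) : Prop :=
  IsSubcoalgebra k C D ∧ D ≠ ⊥ ∧
    ∀ D' : Submodule k C, D' ≤ D → IsSubcoalgebra k C D' → D' = ⊥ ∨ D' = D

/-- The coefficient space of a comodule: the smallest submodule `D ≤ C` such
that the coaction factors through `V ⊗ D`.  For a simple comodule this is its
coefficient coalgebra. -/
def coeffSpace {V : Type u} [AddCommGroup V] [Module k V]
    (ρ : V →ₗ[k] V ⊗[k] C) : Submodule k C :=
  sInf {D : Submodule k C | ∀ v : V, ρ v ∈ LinearMap.range ((D.subtype).lTensor V)}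

/-- Corestriction of a coaction along a linear map of coalgebras `π : C → D`. -/
noncomputable def cores {D : Type u} [AddCommGroup D] [Module k D]
    {V : Type u} [AddCommGroup V] [Module k V]
    (π : C →ₗ[k] D) (ρ : V →ₗ[k] V ⊗[k] C) : V →ₗ[k] V ⊗[k] D :=
  (π.lTensor V) ∘ₗ ρ

end Coalg

section Bialg

variable (H : Type u) [Ring H] [Bialgebra k H]

/-- An invariant vector for a coaction of a bialgebra. -/
def IsInvariant {V : Type u} [AddCommGroup V] [Module k V]
    (ρ : V →ₗ[k] V ⊗[k] H) (v : V) : Prop :=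
  ρ v = v ⊗ₜ[k] (1 : H)

/-- The tensor product coaction on `V ⊗ W` for a bialgebra `H`:
`v ⊗ w ↦ (v₀ ⊗ w₀) ⊗ v₁w₁`. -/
noncomputable def tensorCoact {V W : Type u}
    [AddCommGroup V] [Module k V] [AddCommGroup W] [Module k W]
    (ρV : V →ₗ[k] V ⊗[k] H) (ρW : W →ₗ[k] W ⊗[k] H) :
    (V ⊗[k] W) →ₗ[k] (V ⊗[k] W) ⊗[k] H :=
  ((LinearMap.mul' k H).lTensor (V ⊗[k] W)) ∘ₗ
    (TensorProduct.tensorTensorTensorComm k V H W H).toLinearMap ∘ₗ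
    (TensorProduct.map ρV ρW)

/-- `O(G/H)`: the right coinvariants `{x | (id ⊗ π)Δ(x) = x ⊗ 1}` of a
quotient map `π`. -/
noncomputable def quotientSpaceLeft {B : Type u} [AddCommGroup B] [Module k B] [One B]
    (π : H →ₗ[k] B) : Submodule k H :=
  LinearMap.ker ((π.lTensor H) ∘ₗ (Coalgebra.comul (R := k) (A := H)) -
    (TensorProduct.mk k H B).flip 1)

/-- `O(H\G)`: the left coinvariants `{x | (π ⊗ id)Δ(x) = 1 ⊗ x}`. -/
noncomputable def quotientSpaceRight {B : Type u} [AddCommGroup B] [Module k B] [One B]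
    (π : H →ₗ[k] B) : Submodule k H :=
  LinearMap.ker ((π.rTensor H) ∘ₗ (Coalgebra.comul (R := k) (A := H)) -
    (TensorProduct.mk k B H) 1)

end Bialg

section Hopf

variable (H : Type u) [Ring H] [HopfAlgebra k H]

/-- Iterated comultiplication `x ↦ x₁ ⊗ (x₂ ⊗ x₃)`. -/
noncomputable def comul2 : H →ₗ[k] H ⊗[k] (H ⊗[k] H) :=
  ((Coalgebra.comul (R := k) (A := H)).lTensor H) ∘ₗ (Coalgebra.comul (R := k) (A := H))

/-- The right adjoint coaction `x ↦ x₂ ⊗ S(x₁)x₃`. -/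
noncomputable def adR : H →ₗ[k] H ⊗[k] H :=
  ((LinearMap.mul' k H).lTensor H) ∘ₗ
    (TensorProduct.assoc k H H H).toLinearMap ∘ₗ
    (((TensorProduct.comm k H H).toLinearMap).rTensor H) ∘ₗ
    (TensorProduct.assoc k H H H).symm.toLinearMap ∘ₗ
    ((HopfAlgebra.antipode (R := k) (A := H)).rTensor (H ⊗[k] H)) ∘ₗ
    comul2 k H

/-- The left adjoint coaction `x ↦ x₁S(x₃) ⊗ x₂` (a left coaction, with the
coacting tensorand on the left). -/
noncomputable def adL : H →ₗ[k] H ⊗[k] H :=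
  ((LinearMap.mul' k H).rTensor H) ∘ₗ
    (TensorProduct.assoc k H H H).symm.toLinearMap ∘ₗ
    (((TensorProduct.comm k H H).toLinearMap).lTensor H) ∘ₗ
    (((HopfAlgebra.antipode (R := k) (A := H)).lTensor H).lTensor H) ∘ₗ
    comul2 k H

variable {B : Type u} [AddCommGroup B] [Module k B]

/-- `π : O(G) → O(H)` is right-normal: it is a morphism of right
`O(G)`-comodules for the right adjoint coaction, i.e. the right adjoint
coaction descends along `π`. -/
def IsRightNormal (π : H →ₗ[k] B) : Prop :=
  ∃ ρ : B →ₗ[k] B ⊗[k] H, ρ ∘ₗ π = (π.rTensor H) ∘ₗ adR k H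

/-- `π : O(G) → O(H)` is left-normal: the left adjoint coaction descends
along `π`. -/
def IsLeftNormal (π : H →ₗ[k] B) : Prop :=
  ∃ lam : B →ₗ[k] H ⊗[k] B, lam ∘ₗ π = (π.lTensor H) ∘ₗ adL k H

end Hopf

end QG

namespace QG

variable (k : Type u) [Field k]

section Coalg2

variable (C : Type u) [AddCommGroup C] [Module k C] [Coalgebra k C]

/-- A bundled simple right `C`-comodule. -/
structure SimpleComodule where
  V : Type u
  [addCommGroup : AddCommGroup V]
  [module : Module k V]
  ρ : V →ₗ[k] V ⊗[k] C
  isComod : IsComod k C ρ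
  isSimple : IsSimpleComod k C ρ

attribute [instance] SimpleComodule.addCommGroup SimpleComodule.module

/-- A simple comodule `(T, ρT)` is a constituent of a comodule `(V, ρV)`
(over a cosemisimple coalgebra) iff there is a nonzero comodule map `T → V`. -/
def IsConstituent {T V : Type u} [AddCommGroup T] [Module k T]
    [AddCommGroup V] [Module k V]
    (ρT : T →ₗ[k] T ⊗[k] C) (ρV : V →ₗ[k] V ⊗[k] C) : Prop :=
  ∃ f : T →ₗ[k] V, f ≠ 0 ∧ IsComodHom k C ρT ρV f

/-- Isomorphism of (simple) comodules. -/
def comodIsoRel (X Y : SimpleComodule k C) : Prop :=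
  ∃ e : X.V ≃ₗ[k] Y.V, IsComodHom k C X.ρ Y.ρ e.toLinearMap

/-- The set `Ĉ` of isomorphism classes of simple right `C`-comodules. -/
def SimpleComodQuot := Quot (comodIsoRel k C)

/-- The isomorphism class of a simple comodule. -/
def SimpleComodule.cls (X : SimpleComodule k C) : SimpleComodQuot k C :=
  Quot.mk _ X

/-- Group-like elements of a coalgebra; these correspond to the
one-dimensional comodules, i.e. to characters. -/
def IsGroupLike (a : C) : Prop :=
  Coalgebra.counit (R := k) (A := C) a = (1 : k) ∧
    Coalgebra.comul (R := k) (A := C) a = a ⊗ₜ[k] a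

/-- A linear map `φ : C → Z` out of a coalgebra is central if
`φ(x₁) ⊗ x₂ = φ(x₂) ⊗ x₁`. -/
def IsCentralMap {Z : Type u} [AddCommGroup Z] [Module k Z] (φ : C →ₗ[k] Z) : Prop :=
  (φ.rTensor C) ∘ₗ (Coalgebra.comul (R := k) (A := C)) =
    (φ.rTensor C) ∘ₗ (TensorProduct.comm k C C).toLinearMap ∘ₗ
      (Coalgebra.comul (R := k) (A := C))

/-- The simple comodule `X` has "central character" `g` with respect to the
quotient map `γ : C → Z`: corestricted along `γ`, the coaction on `X` is a sum
of copies of the character `g`. -/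
def HasCentralChar {Z : Type u} [AddCommGroup Z] [Module k Z]
    (γ : C →ₗ[k] Z) (X : SimpleComodule k C) (g : Z) : Prop :=
  ∀ v : X.V, cores k C γ X.ρ v = v ⊗ₜ[k] g

end Coalg2

/-- The k-span of the set of products `g * a`, `a ∈ Am`; for `Am` a submodule
this is the left ideal generated by `Am`. -/
def leftIdealGen {G : Type u} [Ring G] [Module k G] (Am : Submodule k G) :
    Submodule k G :=
  Submodule.span k {x : G | ∃ g : G, ∃ a ∈ Am, x = g * a}

end QG

namespace QG

variable (k : Type u) [Field k]
variable {H B : Type u} [Ring H] [HopfAlgebra k H] [Ring B] [HopfAlgebra k B]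

/-- `const(U) ⊆ B̂`: the set of isomorphism classes of simple `B`-comodule
constituents of the corestriction of the simple `H`-comodule `U` along `π`. -/
noncomputable def constHat (π : H →ₐc[k] B) (U : SimpleComodule k H) :
    Set (SimpleComodQuot k B) :=
  {x | ∃ X : SimpleComodule k B, X.cls = x ∧
    IsConstituent k B X.ρ (cores k H (π : H →ₗ[k] B) U.ρ)}

/-- The relation `∼_B` on `B̂`: two simple `B`-comodules are related iff they
are both constituents of (the corestriction of) one and the same simple
`H`-comodule. -/
noncomputable def relSimB (π : H →ₐc[k] B) :
    SimpleComodQuot k B → SimpleComodQuot k B → Prop :=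
  fun x y => ∃ U : SimpleComodule k H, x ∈ constHat k π U ∧ y ∈ constHat k π U

/-- The relation `∼_H` on `Ĥ`: nonzero `B`-comodule morphisms exist between
corestrictions, i.e. the corestrictions share a simple constituent. -/
noncomputable def relSimH (π : H →ₐc[k] B) :
    SimpleComodQuot k H → SimpleComodQuot k H → Prop :=
  fun x y => ∃ X Y : SimpleComodule k H, X.cls = x ∧ Y.cls = y ∧
    ∃ f : X.V →ₗ[k] Y.V, f ≠ 0 ∧
      IsComodHom k B (cores k H (π : H →ₗ[k] B) X.ρ)
        (cores k H (π : H →ₗ[k] B) Y.ρ) f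

/-- The map `Ĥ → {finite subsets of B̂}` sending a simple `H`-comodule to its
set of simple `B`-constituents. -/
noncomputable def constMap (π : H →ₐc[k] B) :
    SimpleComodQuot k H → Set (SimpleComodQuot k B) :=
  fun x => {y | ∃ U : SimpleComodule k H, U.cls = x ∧ y ∈ constHat k π U}

end QG


namespace QG

section P1

variable {k : Type u} [Field k]
variable {C : Type u} [AddCommGroup C] [Module k C]
variable {V : Type u} [AddCommGroup V] [Module k V]
variable {W : Type u} [AddCommGroup W] [Module k W]

/-- Slice of a tensor by a functional on the right factor. -/
noncomputable def slice (V : Type u) [AddCommGroup V] [Module k V] (φ : C →ₗ[k] k) :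
    V ⊗[k] C →ₗ[k] V :=
  (TensorProduct.rid k V).toLinearMap ∘ₗ φ.lTensor V

@[simp] lemma slice_tmul (φ : C →ₗ[k] k) (v : V) (c : C) :
    slice V φ (v ⊗ₜ[k] c) = φ c • v := by
  simp [slice]

lemma slice_rTensor (φ : C →ₗ[k] k) (f : V →ₗ[k] W) (t : V ⊗[k] C) :
    slice W φ (f.rTensor C t) = f (slice V φ t) := by
  induction t with
  | zero => simp
  | tmul v c => simp
  | add a b ha hb => simp [ha, hb]

lemma slice_sep {t t' : V ⊗[k] C} (h : ∀ φ : C →ₗ[k] k, slice V φ t = slice V φ t') :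
    t = t' := by
  classical
  let b := Module.Basis.ofVectorSpace k C
  apply (TensorProduct.equivFinsuppOfBasisRight (M := V) b).injective
  ext i
  have key : ∀ t : V ⊗[k] C, TensorProduct.equivFinsuppOfBasisRight (M := V) b t i
      = slice V (b.coord i) t := by
    intro t
    induction t with
    | zero => simp
    | tmul v c => simp [TensorProduct.equivFinsuppOfBasisRight_apply_tmul_apply]
    | add a b ha hb => simp [ha, hb]
  rw [key, key, h]

lemma mem_range_iff (U : Submodule k V) (t : V ⊗[k] C) :
    t ∈ LinearMap.range (U.subtype.rTensor C) ↔ ∀ φ : C →ₗ[k] k, slice V φ t ∈ U := by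
  rw [← rTensor_mkQ, LinearMap.mem_ker]
  constructor
  · intro h φ
    rw [← Submodule.Quotient.mk_eq_zero, ← Submodule.mkQ_apply, ← slice_rTensor, h, map_zero]
  · intro h
    apply slice_sep
    intro φ
    rw [slice_rTensor, map_zero]
    simpa using h φ

/-- The action of a functional. -/
noncomputable def act (ρ : V →ₗ[k] V ⊗[k] C) (φ : C →ₗ[k] k) : V →ₗ[k] V :=
  slice V φ ∘ₗ ρ

lemma act_apply (ρ : V →ₗ[k] V ⊗[k] C) (φ : C →ₗ[k] k) (v : V) :
    act ρ φ v = slice V φ (ρ v) := rfl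

variable [Coalgebra k C]

lemma isSubcomod_iff (ρ : V →ₗ[k] V ⊗[k] C) (U : Submodule k V) :
    IsSubcomod k C ρ U ↔ ∀ φ, ∀ u ∈ U, act ρ φ u ∈ U := by
  simp only [IsSubcomod, mem_range_iff, act_apply]
  tauto

lemma isComodHom_iff (ρ : V →ₗ[k] V ⊗[k] C) (σ : W →ₗ[k] W ⊗[k] C) (f : V →ₗ[k] W) :
    IsComodHom k C ρ σ f ↔ ∀ φ v, f (act ρ φ v) = act σ φ (f v) := by
  constructor
  · intro h φ v
    have := LinearMap.congr_fun h v
    simp only [LinearMap.comp_apply] at this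
    rw [act_apply, act_apply, this, slice_rTensor]
  · intro h
    ext v
    apply slice_sep
    intro φ
    simp only [LinearMap.comp_apply]
    rw [slice_rTensor, ← act_apply, ← act_apply, h]

lemma comodHom_comp {Z : Type u} [AddCommGroup Z] [Module k Z]
    {ρ : V →ₗ[k] V ⊗[k] C} {σ : W →ₗ[k] W ⊗[k] C} {τ : Z →ₗ[k] Z ⊗[k] C}
    {f : V →ₗ[k] W} {g : W →ₗ[k] Z} (hg : IsComodHom k C σ τ g) (hf : IsComodHom k C ρ σ f) :
    IsComodHom k C ρ τ (g ∘ₗ f) := by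
  rw [isComodHom_iff] at *
  intro φ v
  simp [hf, hg]

lemma comodHom_symm {ρ : V →ₗ[k] V ⊗[k] C} {σ : W →ₗ[k] W ⊗[k] C}
    {e : V ≃ₗ[k] W} (h : IsComodHom k C ρ σ e.toLinearMap) :
    IsComodHom k C σ ρ e.symm.toLinearMap := by
  rw [isComodHom_iff] at *
  intro φ v
  apply e.injective
  have := h φ (e.symm v)
  simp at this
  simp [this]

lemma ker_sub {ρ : V →ₗ[k] V ⊗[k] C} {σ : W →ₗ[k] W ⊗[k] C}
    {f : V →ₗ[k] W} (h : IsComodHom k C ρ σ f) : IsSubcomod k C ρ (LinearMap.ker f) := by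
  rw [isComodHom_iff] at h
  rw [isSubcomod_iff]
  intro φ u hu
  rw [LinearMap.mem_ker] at *
  rw [h, hu, map_zero]

lemma range_sub {ρ : V →ₗ[k] V ⊗[k] C} {σ : W →ₗ[k] W ⊗[k] C}
    {f : V →ₗ[k] W} (h : IsComodHom k C ρ σ f) : IsSubcomod k C σ (LinearMap.range f) := by
  rw [isComodHom_iff] at h
  rw [isSubcomod_iff]
  rintro φ _ ⟨v, rfl⟩
  exact ⟨_, h φ v⟩

lemma simple_inj {ρ : V →ₗ[k] V ⊗[k] C} {σ : W →ₗ[k] W ⊗[k] C}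
    {f : V →ₗ[k] W} (hV : IsSimpleComod k C ρ) (h : IsComodHom k C ρ σ f) (hf : f ≠ 0) :
    Function.Injective f := by
  rcases hV.2.2 _ le_top (ker_sub h) with h1 | h1
  · exact LinearMap.ker_eq_bot.1 h1
  · exact (hf (LinearMap.ker_eq_top.1 h1)).elim

lemma simple_surj {ρ : V →ₗ[k] V ⊗[k] C} {σ : W →ₗ[k] W ⊗[k] C}
    {f : V →ₗ[k] W} (hW : IsSimpleComod k C σ) (h : IsComodHom k C ρ σ f) (hf : f ≠ 0) :
    Function.Surjective f := by
  rcases hW.2.2 _ le_top (range_sub h) with h1 | h1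
  · exact (hf (LinearMap.range_eq_bot.1 h1)).elim
  · exact LinearMap.range_eq_top.1 h1

lemma schur {ρ : V →ₗ[k] V ⊗[k] C} {σ : W →ₗ[k] W ⊗[k] C}
    {f : V →ₗ[k] W} (hV : IsSimpleComod k C ρ) (hW : IsSimpleComod k C σ)
    (h : IsComodHom k C ρ σ f) (hf : f ≠ 0) :
    ∃ e : V ≃ₗ[k] W, IsComodHom k C ρ σ e.toLinearMap := by
  refine ⟨LinearEquiv.ofBijective f ⟨simple_inj hV h hf, simple_surj hW h hf⟩, ?_⟩
  exact h

/-- A subcomodule has a restricted coaction. -/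
lemma exists_res {ρ : V →ₗ[k] V ⊗[k] C} (hρ : IsComod k C ρ) {U : Submodule k V}
    (hU : IsSubcomod k C ρ U) :
    ∃ σ : U →ₗ[k] U ⊗[k] C, IsComod k C σ ∧ IsComodHom k C σ ρ U.subtype := by
  have inj : Function.Injective (U.subtype.rTensor C) :=
    Module.Flat.rTensor_preserves_injective_linearMap _ U.injective_subtype
  let e := LinearEquiv.ofInjective (U.subtype.rTensor C) inj
  let σ : U →ₗ[k] U ⊗[k] C := e.symm.toLinearMap ∘ₗ
    LinearMap.codRestrict _ (ρ ∘ₗ U.subtype) (fun u => hU u u.2)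
  have hσ : ∀ u, U.subtype.rTensor C (σ u) = ρ u := by
    intro u
    have : (e (σ u) : V ⊗[k] C) = ρ u := by
      simp only [σ, LinearMap.comp_apply, LinearEquiv.coe_coe, LinearEquiv.apply_symm_apply]
      rfl
    exact this
  have hom : IsComodHom k C σ ρ U.subtype := by
    ext u
    simp [hσ]
  refine ⟨σ, ⟨?_, ?_⟩, hom⟩
  · intro v
    have inj2 : Function.Injective ((U.subtype.rTensor C).rTensor C) :=
      Module.Flat.rTensor_preserves_injective_linearMap _ inj
    apply inj2
    have h1 : ((U.subtype.rTensor C).rTensor C) (σ.rTensor C (σ v)) = ρ.rTensor C (ρ v) := by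
      rw [← hσ v, ← LinearMap.rTensor_comp_apply, ← LinearMap.rTensor_comp_apply]
      congr 2
      exact hom.symm
    rw [h1, hρ.coassoc, ← hσ]
    generalize σ v = t
    induction t with
    | zero => simp
    | add a b ha hb => simp only [map_add, ha, hb]
    | tmul u c =>
      simp only [LinearMap.rTensor_tmul, LinearMap.lTensor_tmul]
      generalize Coalgebra.comul (R := k) c = s
      induction s with
      | zero => simp
      | add a b ha hb => simp only [map_add, TensorProduct.tmul_add, ha, hb]
      | tmul a b => simp
  · intro v
    apply U.injective_subtype
    have := hρ.counit v
    rw [← hσ] at this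
    rw [Submodule.subtype_apply, Submodule.subtype_apply]
    rw [← this]
    symm
    exact slice_rTensor Coalgebra.counit U.subtype (σ v)

lemma res_simple {ρ : V →ₗ[k] V ⊗[k] C} {U : Submodule k V}
    (hU : IsSimpleSubcomod k C ρ U) {σ : U →ₗ[k] U ⊗[k] C} 
    (hσ : IsComodHom k C σ ρ U.subtype) : IsSimpleComod k C σ := by
  rw [isComodHom_iff] at hσ
  refine ⟨?_, ?_, ?_⟩
  · rw [isSubcomod_iff]; simp
  · intro h
    apply hU.2.1
    rw [← Submodule.map_subtype_top U, h, Submodule.map_bot]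
  · intro U' _ h
    have := hU.2.2 (U'.map U.subtype) (Submodule.map_subtype_le _ _) (by
      rw [isSubcomod_iff] at *
      rintro φ _ ⟨u, hu, rfl⟩
      rw [← hσ]
      exact ⟨_, h φ u hu, rfl⟩)
    rcases this with h | h
    · left
      apply Submodule.map_injective_of_injective U.injective_subtype
      rw [h, Submodule.map_bot]
    · right
      apply Submodule.map_injective_of_injective U.injective_subtype
      rw [h, Submodule.map_subtype_top]

/-- Decomposition of a comodule over a cosemisimple coalgebra. -/
lemma exists_decomp (hC : IsCosemisimple k C) {ρ : V →ₗ[k] V ⊗[k] C} (hρ : IsComod k C ρ) :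
    ∃ (ι : Type u) (X : ι → SimpleComodule k C) (i : ∀ j, (X j).V →ₗ[k] V)
      (p : ∀ j, V →ₗ[k] (X j).V),
      (∀ j, IsComodHom k C (X j).ρ ρ (i j)) ∧ (∀ j, IsComodHom k C ρ (X j).ρ (p j)) ∧
      (∀ v, (∀ j, p j v = 0) → v = 0) ∧ (⨆ j, LinearMap.range (i j)) = ⊤ ∧
      (∀ j, i j ≠ 0) ∧ (FiniteDimensional k V → Finite ι) := by
  classical
  obtain ⟨ι, U, hU, hind, htop⟩ := hC V ρ hρ
  choose σ hσ hσ' using fun j => exists_res hρ (hU j).1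
  have hbot : ∀ j, U j ≠ ⊥ := fun j => (hU j).2.1
  have hint : DirectSum.IsInternal U := DirectSum.isInternal_submodule_of_iSupIndep_of_iSup_eq_top hind htop
  let e : (DirectSum ι fun j => U j) ≃ₗ[k] V := LinearEquiv.ofBijective (DirectSum.coeLinearMap U) hint
  have he : ∀ j (u : U j), e.symm (u : V) = DirectSum.lof k ι (fun j => U j) j u := by
    intro j u
    rw [LinearEquiv.symm_apply_eq]
    exact (DirectSum.coeLinearMap_lof U j u).symm
  refine ⟨ι, fun j => ⟨U j, σ j, hσ j, res_simple (hU j) (hσ' j)⟩, fun j => (U j).subtype,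
    fun j => DirectSum.component k ι (fun j => U j) j ∘ₗ e.symm.toLinearMap, hσ', ?_, ?_, ?_, ?_, ?_⟩
  · intro j
    rw [isComodHom_iff]
    intro φ v
    have hv : v ∈ ⨆ j, U j := by rw [htop]; trivial
    induction hv using Submodule.iSup_induction' with
    | mem l x hx =>
      have h1 := (isComodHom_iff _ _ _).1 (hσ' l) φ ⟨x, hx⟩
      simp only [Submodule.subtype_apply] at h1
      simp only [LinearMap.comp_apply, LinearEquiv.coe_coe]
      have h2 := he l ⟨x, hx⟩
      simp only at h2
      rw [← h1, he, h2]
      by_cases hlj : l = j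
      · subst hlj
        simp [DirectSum.component.lof_self]
      · rw [DirectSum.component.of, DirectSum.component.of, dif_neg hlj, dif_neg hlj, map_zero]
    | zero => simp only [map_zero]
    | add x y _ _ hx hy => simp only [map_add, hx, hy]
  · intro v hv
    apply e.symm.injective
    rw [map_zero]
    apply DFinsupp.ext
    intro j
    exact hv j
  · simpa using htop
  · intro j h
    apply hbot j
    rw [← (U j).range_subtype, show (U j).subtype = 0 from h, LinearMap.range_zero]
  · intro _
    exact WellFoundedGT.finite_of_iSupIndep hind hbot

end P1
end QG

namespace QG

section P2

open WithConv Algebra.TensorProduct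

variable {k : Type u} [Field k]
variable {H B : Type u} [Ring H] [HopfAlgebra k H] [Ring B] [HopfAlgebra k B]
variable {V : Type u} [AddCommGroup V] [Module k V]
variable {W : Type u} [AddCommGroup W] [Module k W]
variable {R R' : Type u} [Ring R] [Algebra k R] [Ring R'] [Algebra k R']

/-- multiplication of the right leg -/
noncomputable def mulR (W R : Type u) [AddCommGroup W] [Module k W] [Ring R] [Algebra k R] :
    (W ⊗[k] R) ⊗[k] R →ₗ[k] W ⊗[k] R :=
  (LinearMap.mul' k R).lTensor W ∘ₗ (TensorProduct.assoc k W R R).toLinearMap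

@[simp] lemma mulR_tmul (w : W) (r s : R) :
    mulR (k := k) W R ((w ⊗ₜ[k] r) ⊗ₜ[k] s) = w ⊗ₜ[k] (r * s) := by
  simp [mulR]

/-- convolution action -/
noncomputable def star' (ρ : V →ₗ[k] V ⊗[k] H) (g : V →ₗ[k] W ⊗[k] R) (h : H →ₗ[k] R) :
    V →ₗ[k] W ⊗[k] R :=
  mulR W R ∘ₗ TensorProduct.map g h ∘ₗ ρ

lemma star'_star' {ρ : V →ₗ[k] V ⊗[k] H} (hρ : IsComod k H ρ) (g : V →ₗ[k] W ⊗[k] R)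
    (h h' : H →ₗ[k] R) :
    star' ρ (star' ρ g h) h' = star' ρ g (toConv h * toConv h').ofConv := by
  ext v
  have h1 : star' ρ (star' ρ g h) h' v =
      mulR W R (TensorProduct.map (mulR W R ∘ₗ TensorProduct.map g h) h'
        (ρ.rTensor H (ρ v))) := by
    simp only [star', LinearMap.comp_apply]
    congr 1
    generalize ρ v = t
    induction t with
    | zero => simp
    | add a b ha hb => simp only [map_add, ha, hb]
    | tmul x c => simp
  rw [h1, hρ.coassoc]
  simp only [star', LinearMap.comp_apply]
  generalize ρ v = t
  induction t with
  | zero => simp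
  | add a b ha hb => simp only [map_add, ha, hb]
  | tmul x c =>
    rw [LinearMap.lTensor_tmul, TensorProduct.map_tmul, LinearMap.convMul_def]
    simp only [LinearMap.comp_apply]
    generalize Coalgebra.comul (R := k) c = s
    induction s with
    | zero => simp
    | add a b ha hb => simp only [map_add, TensorProduct.tmul_add, ha, hb]
    | tmul a b =>
      simp only [LinearEquiv.coe_coe, TensorProduct.assoc_symm_tmul, TensorProduct.map_tmul,
        LinearMap.comp_apply, LinearMap.mul'_apply]
      generalize g x = y
      induction y with
      | zero => simp
      | add a b ha hb => simp only [map_add, TensorProduct.add_tmul, ha, hb]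
      | tmul w r => simp [mul_assoc]

lemma star'_one {ρ : V →ₗ[k] V ⊗[k] H} (hρ : IsComod k H ρ) (g : V →ₗ[k] W ⊗[k] R) :
    star' ρ g (1 : WithConv (H →ₗ[k] R)).ofConv = g := by
  ext v
  conv_rhs => rw [← hρ.counit v]
  simp only [star', LinearMap.comp_apply]
  generalize ρ v = t
  induction t with
  | zero => simp
  | add a b ha hb => simp only [map_add, ha, hb]
  | tmul x c =>
    simp only [TensorProduct.map_tmul, LinearMap.lTensor_tmul, TensorProduct.rid_tmul, map_smul,
      LinearMap.convOne_def, LinearMap.comp_apply, Algebra.linearMap_apply]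
    generalize g x = y
    induction y with
    | zero => simp
    | add a b ha hb => simp only [map_add, TensorProduct.add_tmul, ha, hb, smul_add]
    | tmul w r =>
      rw [mulR_tmul, ← Algebra.commutes, ← Algebra.smul_def, TensorProduct.tmul_smul]

lemma alg_star' (ρ : V →ₗ[k] V ⊗[k] H) (g : V →ₗ[k] W ⊗[k] R) (h : H →ₗ[k] R)
    (θ : R →ₐ[k] R') :
    (θ.toLinearMap.lTensor W) ∘ₗ star' ρ g h =
      star' ρ ((θ.toLinearMap.lTensor W) ∘ₗ g) (θ.toLinearMap ∘ₗ h) := by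
  ext v
  simp only [star', LinearMap.comp_apply]
  generalize ρ v = t
  induction t with
  | zero => simp
  | add a b ha hb => simp only [map_add, ha, hb]
  | tmul x c =>
    simp only [TensorProduct.map_tmul, LinearMap.comp_apply]
    generalize g x = y
    induction y with
    | zero => simp
    | add a b ha hb => simp only [map_add, TensorProduct.add_tmul, ha, hb]
    | tmul w r => simp

/-- coaction applied to the left leg -/
noncomputable def kap (c : W →ₗ[k] W ⊗[k] B) : W ⊗[k] H →ₗ[k] W ⊗[k] (B ⊗[k] H) :=
  (TensorProduct.assoc k W B H).toLinearMap ∘ₗ c.rTensor H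

lemma kap_star' (ρ : V →ₗ[k] V ⊗[k] H) (g : V →ₗ[k] W ⊗[k] H) (h : H →ₗ[k] H)
    (c : W →ₗ[k] W ⊗[k] B) :
    kap c ∘ₗ star' ρ g h =
      star' ρ (kap c ∘ₗ g) ((includeRight : H →ₐ[k] B ⊗[k] H).toLinearMap ∘ₗ h) := by
  ext v
  simp only [star', LinearMap.comp_apply]
  generalize ρ v = t
  induction t with
  | zero => simp
  | add a b ha hb => simp only [map_add, ha, hb]
  | tmul x d =>
    simp only [TensorProduct.map_tmul, LinearMap.comp_apply]
    generalize g x = y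
    induction y with
    | zero => simp
    | add a b ha hb => simp only [map_add, TensorProduct.add_tmul, ha, hb]
    | tmul w r =>
      simp only [mulR_tmul, kap, LinearMap.comp_apply, LinearMap.rTensor_tmul]
      generalize c w = z
      induction z with
      | zero => simp
      | add a b ha hb => simp only [map_add, TensorProduct.add_tmul, ha, hb]
      | tmul w r => simp

/-- `(id ⊗ π) Δ` -/
noncomputable def th1 (π : H →ₐc[k] B) : H →ₐ[k] H ⊗[k] B :=
  (Algebra.TensorProduct.map (AlgHom.id k H) (π : H →ₐ[k] B)).comp (Bialgebra.comulAlgHom k H)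

/-- `(π ⊗ id) Δ` -/
noncomputable def th2 (π : H →ₐc[k] B) : H →ₐ[k] B ⊗[k] H :=
  (Algebra.TensorProduct.map (π : H →ₐ[k] B) (AlgHom.id k H)).comp (Bialgebra.comulAlgHom k H)

lemma th1_eq (π : H →ₐc[k] B) : toConv (th1 π).toLinearMap =
    toConv (includeLeft : H →ₐ[k] H ⊗[k] B).toLinearMap *
      toConv ((includeRight : B →ₐ[k] H ⊗[k] B).toLinearMap ∘ₗ (π : H →ₗ[k] B)) := by
  rw [LinearMap.convMul_def]
  congr 1
  ext c
  simp only [th1, LinearMap.comp_apply, AlgHom.toLinearMap_apply, AlgHom.comp_apply,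
    Bialgebra.comulAlgHom_apply]
  generalize Coalgebra.comul (R := k) c = s
  induction s with
  | zero => simp
  | add a b ha hb => simp only [map_add, ha, hb]
  | tmul a b => simp

lemma th2_eq (π : H →ₐc[k] B) : toConv (th2 π).toLinearMap =
    toConv ((includeLeft : B →ₐ[k] B ⊗[k] H).toLinearMap ∘ₗ (π : H →ₗ[k] B)) *
    toConv (includeRight : H →ₐ[k] B ⊗[k] H).toLinearMap := by
  rw [LinearMap.convMul_def]
  congr 1
  ext c
  simp only [th2, LinearMap.comp_apply, AlgHom.toLinearMap_apply, AlgHom.comp_apply,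
    Bialgebra.comulAlgHom_apply]
  generalize Coalgebra.comul (R := k) c = s
  induction s with
  | zero => simp
  | add a b ha hb => simp only [map_add, ha, hb]
  | tmul a b => simp

lemma alg_antipode_left (θ : H →ₐ[k] R) :
    toConv (θ.toLinearMap ∘ₗ HopfAlgebra.antipode k (A := H)) * toConv θ.toLinearMap = 1 := by
  have := LinearMap.algHom_comp_convMul_distrib θ (toConv (HopfAlgebra.antipode k (A := H)))
    (toConv LinearMap.id)
  rw [LinearMap.antipode_mul_id] at this
  simp only [LinearMap.comp_id] at this
  ext x
  have := LinearMap.congr_fun this x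
  simp at this
  simp [← this]

lemma alg_antipode_right (θ : H →ₐ[k] R) :
    toConv θ.toLinearMap * toConv (θ.toLinearMap ∘ₗ HopfAlgebra.antipode k (A := H)) = 1 := by
  have := LinearMap.algHom_comp_convMul_distrib θ 
    (toConv LinearMap.id) (toConv (HopfAlgebra.antipode k (A := H)))
  rw [LinearMap.id_mul_antipode] at this
  simp only [LinearMap.comp_id] at this
  ext x
  have := LinearMap.congr_fun this x
  simp at this
  simp [← this]

end P2
end QG

namespace QG

section P3

open WithConv Algebra.TensorProduct

variable {k : Type u} [Field k]
variable {H B : Type u} [Ring H] [HopfAlgebra k H] [Ring B] [HopfAlgebra k B]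
variable {V : Type u} [AddCommGroup V] [Module k V]
variable {W : Type u} [AddCommGroup W] [Module k W]

lemma fact1 {ρ : V →ₗ[k] V ⊗[k] H} {σ : W →ₗ[k] W ⊗[k] H} (hσ : IsComod k H σ)
    (π : H →ₐc[k] B) {f : V →ₗ[k] W}
    (hf : IsComodHom k B (cores k H (π : H →ₗ[k] B) ρ) (cores k H (π : H →ₗ[k] B) σ) f) :
    ((th1 π).toLinearMap.lTensor W) ∘ₗ (σ ∘ₗ f) =
      star' ρ (((includeLeft : H →ₐ[k] H ⊗[k] B).toLinearMap.lTensor W) ∘ₗ (σ ∘ₗ f))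
        ((includeRight : B →ₐ[k] H ⊗[k] B).toLinearMap ∘ₗ (π : H →ₗ[k] B)) := by
  ext v
  have h1 : ((th1 π).toLinearMap.lTensor W) (σ (f v)) =
      TensorProduct.assoc k W H B (σ.rTensor B (cores k H (π : H →ₗ[k] B) σ (f v))) := by
    have h2 : σ.rTensor B (cores k H (π : H →ₗ[k] B) σ (f v)) =
        (π : H →ₗ[k] B).lTensor (W ⊗[k] H) (σ.rTensor H (σ (f v))) := by
      simp only [cores, LinearMap.comp_apply]
      generalize σ (f v) = t
      induction t with
      | zero => simp
      | add a b ha hb => simp only [map_add, ha, hb]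
      | tmul x c => simp
    rw [h2, hσ.coassoc]
    generalize σ (f v) = t
    induction t with
    | zero => simp
    | add a b ha hb => simp only [map_add, ha, hb]
    | tmul x c =>
      simp only [LinearMap.lTensor_tmul, th1, AlgHom.toLinearMap_apply, AlgHom.comp_apply,
        Bialgebra.comulAlgHom_apply]
      generalize Coalgebra.comul (R := k) c = s
      induction s with
      | zero => simp
      | add a b ha hb => simp only [map_add, TensorProduct.tmul_add, ha, hb]
      | tmul a b => simp
  simp only [LinearMap.comp_apply]
  rw [h1]
  have h3 := LinearMap.congr_fun hf v
  simp only [LinearMap.comp_apply] at h3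
  rw [h3]
  simp only [star', cores, LinearMap.comp_apply]
  generalize ρ v = t
  induction t with
  | zero => simp
  | add a b ha hb => simp only [map_add, ha, hb]
  | tmul x c =>
    simp only [LinearMap.lTensor_tmul, LinearMap.rTensor_tmul, TensorProduct.map_tmul,
      LinearMap.comp_apply]
    generalize σ (f x) = y
    induction y with
    | zero => simp
    | add a b ha hb => simp only [map_add, TensorProduct.add_tmul, ha, hb]
    | tmul w r => simp

lemma fact2 {A : Type u} [Ring A] [HopfAlgebra k A] (ι : A →ₐc[k] H) (π : H →ₐc[k] B)
    (hA : LinearMap.range (ι : A →ₗ[k] H) = quotientSpaceLeft k H (π : H →ₗ[k] B))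
    (x : H) (hx : th1 π x = x ⊗ₜ[k] 1) : th2 π x = 1 ⊗ₜ[k] x := by
  have th1_apply : ∀ x, th1 π x = (π : H →ₗ[k] B).lTensor H (Coalgebra.comul (R := k) x) :=
    fun x => rfl
  have th2_apply : ∀ x, th2 π x = (π : H →ₗ[k] B).rTensor H (Coalgebra.comul (R := k) x) :=
    fun x => rfl
  have mem : ∀ x, x ∈ LinearMap.range (ι : A →ₗ[k] H) ↔ th1 π x = x ⊗ₜ[k] 1 := by
    intro x
    rw [hA, quotientSpaceLeft, LinearMap.mem_ker, LinearMap.sub_apply, sub_eq_zero, th1_apply]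
    rfl
  obtain ⟨a, rfl⟩ := (mem x).2 hx
  have h1 : ∀ a : A, π (ι a) = algebraMap k B (Coalgebra.counit (R := k) a) := by
    intro a
    have h2 := (mem (ι a)).1 ⟨a, rfl⟩
    rw [th1_apply] at h2
    have h3 := congrArg (TensorProduct.lid k B ∘ (Coalgebra.counit (R := k) (A := H)).rTensor B) h2
    simp only [Function.comp_apply] at h3
    rw [← LinearMap.comp_apply, LinearMap.rTensor_comp_lTensor, ← LinearMap.lTensor_comp_rTensor,
      LinearMap.comp_apply, Coalgebra.rTensor_counit_comul] at h3
    simp at h3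
    rw [h3, Algebra.algebraMap_eq_smul_one]
  have h4 : Coalgebra.comul (R := k) ((ι : A →ₗ[k] H) a) =
      TensorProduct.map (ι : A →ₗ[k] H) (ι : A →ₗ[k] H) (Coalgebra.comul (R := k) a) :=
    (CoalgHomClass.map_comp_comul_apply ι a).symm
  rw [th2_apply, h4]
  conv_rhs => rw [show (ι : A →ₗ[k] H) a = (ι : A →ₗ[k] H) (TensorProduct.lid k A
    ((Coalgebra.counit (R := k) (A := A)).rTensor A (Coalgebra.comul (R := k) a))) by
      rw [Coalgebra.rTensor_counit_comul]; simp]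
  generalize Coalgebra.comul (R := k) a = s
  induction s with
  | zero => simp
  | add a b ha hb => simp only [map_add, TensorProduct.tmul_add, ha, hb]
  | tmul a b =>
    simp [h1, Algebra.algebraMap_eq_smul_one, TensorProduct.smul_tmul]

lemma fact3 {A : Type u} [Ring A] [HopfAlgebra k A] (ι : A →ₐc[k] H) (π : H →ₐc[k] B)
    (hA : LinearMap.range (ι : A →ₗ[k] H) = quotientSpaceLeft k H (π : H →ₗ[k] B))
    (t : W ⊗[k] H) (ht : (th1 π).toLinearMap.lTensor W t =
      (includeLeft : H →ₐ[k] H ⊗[k] B).toLinearMap.lTensor W t) :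
    (th2 π).toLinearMap.lTensor W t =
      (includeRight : H →ₐ[k] B ⊗[k] H).toLinearMap.lTensor W t := by
  let g := (th1 π).toLinearMap - (includeLeft : H →ₐ[k] H ⊗[k] B).toLinearMap
  have hex : Function.Exact (LinearMap.ker g).subtype g := LinearMap.exact_subtype_ker_map g
  have := Module.Flat.lTensor_exact W hex
  have ht' : g.lTensor W t = 0 := by
    simp only [g, LinearMap.lTensor_sub, LinearMap.sub_apply, ht, sub_self]
  obtain ⟨s, rfl⟩ := (this t).1 ht'
  rw [← LinearMap.lTensor_comp_apply, ← LinearMap.lTensor_comp_apply]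
  congr 2
  ext ⟨x, hx⟩
  have : th1 π x = x ⊗ₜ[k] 1 := by
    rw [LinearMap.mem_ker] at hx
    simpa [g, sub_eq_zero] using hx
  simpa using fact2 ι π hA x this

/-- the key map `f(v₀)₀ ⊗ f(v₀)₁ S(v₁)` -/
noncomputable def FF (ρ : V →ₗ[k] V ⊗[k] H) (σ : W →ₗ[k] W ⊗[k] H) (f : V →ₗ[k] W) :
    V →ₗ[k] W ⊗[k] H :=
  star' ρ (σ ∘ₗ f) (HopfAlgebra.antipode k (A := H))

lemma FF_star {ρ : V →ₗ[k] V ⊗[k] H} (hρ : IsComod k H ρ) (σ : W →ₗ[k] W ⊗[k] H)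
    (f : V →ₗ[k] W) : star' ρ (FF ρ σ f) LinearMap.id = σ ∘ₗ f := by
  rw [FF, star'_star' hρ, LinearMap.antipode_mul_id, star'_one hρ]

lemma FF_th1 {ρ : V →ₗ[k] V ⊗[k] H} {σ : W →ₗ[k] W ⊗[k] H} (hρ : IsComod k H ρ)
    (hσ : IsComod k H σ) (π : H →ₐc[k] B) {f : V →ₗ[k] W}
    (hf : IsComodHom k B (cores k H (π : H →ₗ[k] B) ρ) (cores k H (π : H →ₗ[k] B) σ) f) :
    ((th1 π).toLinearMap.lTensor W) ∘ₗ FF ρ σ f =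
      ((includeLeft : H →ₐ[k] H ⊗[k] B).toLinearMap.lTensor W) ∘ₗ FF ρ σ f := by
  rw [FF, alg_star', alg_star', fact1 hσ π hf, star'_star' hρ]
  have h1 : toConv ((includeRight : B →ₐ[k] H ⊗[k] B).toLinearMap ∘ₗ (π : H →ₗ[k] B)) =
      toConv ((includeLeft : H →ₐ[k] H ⊗[k] B).toLinearMap ∘ₗ HopfAlgebra.antipode k (A := H)) *
        toConv (th1 π).toLinearMap := by
    rw [th1_eq, ← mul_assoc, alg_antipode_left, one_mul]
  rw [h1, mul_assoc, alg_antipode_right, mul_one]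

lemma FF_kap {A : Type u} [Ring A] [HopfAlgebra k A] (ι : A →ₐc[k] H) (π : H →ₐc[k] B)
    (hA : LinearMap.range (ι : A →ₗ[k] H) = quotientSpaceLeft k H (π : H →ₗ[k] B))
    {ρ : V →ₗ[k] V ⊗[k] H} {σ : W →ₗ[k] W ⊗[k] H} (hρ : IsComod k H ρ)
    (hσ : IsComod k H σ) {f : V →ₗ[k] W}
    (hf : IsComodHom k B (cores k H (π : H →ₗ[k] B) ρ) (cores k H (π : H →ₗ[k] B) σ) f) :
    kap (cores k H (π : H →ₗ[k] B) σ) ∘ₗ FF ρ σ f =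
      star' ρ (((includeRight : H →ₐ[k] B ⊗[k] H).toLinearMap.lTensor W) ∘ₗ FF ρ σ f)
        ((includeLeft : B →ₐ[k] B ⊗[k] H).toLinearMap ∘ₗ (π : H →ₗ[k] B)) := by
  have h1 : ((th2 π).toLinearMap.lTensor W) ∘ₗ FF ρ σ f =
      ((includeRight : H →ₐ[k] B ⊗[k] H).toLinearMap.lTensor W) ∘ₗ FF ρ σ f := by
    refine LinearMap.ext fun v => ?_
    exact fact3 ι π hA _ (LinearMap.congr_fun (FF_th1 hρ hσ π hf) v)
  have h2 : kap (cores k H (π : H →ₗ[k] B) σ) ∘ₗ (σ ∘ₗ f) =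
      ((th2 π).toLinearMap.lTensor W) ∘ₗ (σ ∘ₗ f) := by
    ext v
    simp only [LinearMap.comp_apply]
    have h3 : kap (H := H) (cores k H (π : H →ₗ[k] B) σ) (σ (f v)) =
      TensorProduct.assoc k W B H (((π : H →ₗ[k] B).lTensor W).rTensor H
        (σ.rTensor H (σ (f v)))) := by
      simp [kap, cores, LinearMap.rTensor_comp]
    rw [h3, hσ.coassoc]
    generalize σ (f v) = t
    induction t with
    | zero => simp
    | add a b ha hb => simp only [map_add, ha, hb]
    | tmul x c =>
      simp only [LinearMap.lTensor_tmul, th2, AlgHom.toLinearMap_apply, AlgHom.comp_apply,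
        Bialgebra.comulAlgHom_apply]
      generalize Coalgebra.comul (R := k) c = s
      induction s with
      | zero => simp
      | add a b ha hb => simp only [map_add, TensorProduct.tmul_add, ha, hb]
      | tmul a b => simp
  have h4 : ((th2 π).toLinearMap.lTensor W) ∘ₗ (σ ∘ₗ f) =
      star' ρ (((includeRight : H →ₐ[k] B ⊗[k] H).toLinearMap.lTensor W) ∘ₗ FF ρ σ f)
        (th2 π).toLinearMap := by
    rw [← FF_star hρ σ f, alg_star', h1, LinearMap.comp_id]
  conv_lhs => rw [FF, kap_star', h2, h4, star'_star' hρ, th2_eq, mul_assoc, alg_antipode_right,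
    mul_one]

lemma FF_slice {A : Type u} [Ring A] [HopfAlgebra k A] (ι : A →ₐc[k] H) (π : H →ₐc[k] B)
    (hA : LinearMap.range (ι : A →ₗ[k] H) = quotientSpaceLeft k H (π : H →ₗ[k] B))
    {ρ : V →ₗ[k] V ⊗[k] H} {σ : W →ₗ[k] W ⊗[k] H} (hρ : IsComod k H ρ)
    (hσ : IsComod k H σ) {f : V →ₗ[k] W}
    (hf : IsComodHom k B (cores k H (π : H →ₗ[k] B) ρ) (cores k H (π : H →ₗ[k] B) σ) f)
    (φ : H →ₗ[k] k) :
    IsComodHom k B (cores k H (π : H →ₗ[k] B) ρ) (cores k H (π : H →ₗ[k] B) σ)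
      (slice W φ ∘ₗ FF ρ σ f) := by
  refine LinearMap.ext fun v => ?_
  have h := congrArg ((slice B φ).lTensor W)
    (LinearMap.congr_fun (FF_kap ι π hA hρ hσ hf) v)
  simp only [LinearMap.comp_apply] at h ⊢
  have h1 : ∀ t : W ⊗[k] H, (slice B φ).lTensor W (kap (cores k H (π : H →ₗ[k] B) σ) t) =
      cores k H (π : H →ₗ[k] B) σ (slice W φ t) := by
    intro t
    induction t with
    | zero => simp
    | add a b ha hb => simp only [map_add, ha, hb]
    | tmul w x =>
      simp only [kap, LinearMap.comp_apply, LinearMap.rTensor_tmul, slice_tmul, map_smul]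
      generalize cores k H (π : H →ₗ[k] B) σ w = z
      induction z with
      | zero => simp
      | add a b ha hb => simp only [map_add, TensorProduct.add_tmul, ha, hb, smul_add]
      | tmul w r => simp
  rw [h1] at h
  rw [h]
  simp only [star', cores, LinearMap.comp_apply]
  generalize ρ v = t
  induction t with
  | zero => simp
  | add a b ha hb => simp only [map_add, ha, hb]
  | tmul x c =>
    simp only [LinearMap.lTensor_tmul, LinearMap.rTensor_tmul, TensorProduct.map_tmul,
      LinearMap.comp_apply]
    generalize FF ρ σ f x = y
    induction y with
    | zero => simp
    | add a b ha hb => simp only [map_add, TensorProduct.add_tmul, ha, hb]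
    | tmul w r => simp [TensorProduct.smul_tmul']

/-- The sum of images of `B`-colinear maps is an `H`-subcomodule. -/
lemma sum_images {A : Type u} [Ring A] [HopfAlgebra k A] (ι : A →ₐc[k] H) (π : H →ₐc[k] B)
    (hA : LinearMap.range (ι : A →ₗ[k] H) = quotientSpaceLeft k H (π : H →ₗ[k] B))
    {ρ : V →ₗ[k] V ⊗[k] H} {σ : W →ₗ[k] W ⊗[k] H} (hρ : IsComod k H ρ)
    (hσ : IsComod k H σ) :
    IsSubcomod k H σ (Submodule.span k {w | ∃ f : V →ₗ[k] W, ∃ v,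
      IsComodHom k B (cores k H (π : H →ₗ[k] B) ρ) (cores k H (π : H →ₗ[k] B) σ) f ∧
      w = f v}) := by
  set W' := Submodule.span k {w | ∃ f : V →ₗ[k] W, ∃ v,
      IsComodHom k B (cores k H (π : H →ₗ[k] B) ρ) (cores k H (π : H →ₗ[k] B) σ) f ∧
      w = f v} with hW'
  intro u hu
  induction hu using Submodule.span_induction with
  | zero => simp
  | add a b _ _ ha hb => rw [map_add]; exact Submodule.add_mem _ ha hb
  | smul r a _ ha => rw [map_smul]; exact Submodule.smul_mem _ _ ha
  | mem w hw =>
    obtain ⟨f, v, hf, rfl⟩ := hw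
    have h1 : ∀ x, FF ρ σ f x ∈ LinearMap.range (W'.subtype.rTensor H) := by
      intro x
      rw [mem_range_iff]
      intro φ
      exact Submodule.subset_span ⟨slice W φ ∘ₗ FF ρ σ f, x, FF_slice ι π hA hρ hσ hf φ, rfl⟩
    rw [show σ (f v) = star' ρ (FF ρ σ f) LinearMap.id v by rw [FF_star hρ]; rfl]
    simp only [star', LinearMap.comp_apply]
    generalize ρ v = t
    induction t with
    | zero => simp
    | add a b ha hb => simp only [map_add]; exact Submodule.add_mem _ ha hb
    | tmul x c =>
      obtain ⟨s, hs⟩ := h1 x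
      rw [TensorProduct.map_tmul, ← hs]
      clear hs
      induction s with
      | zero => simp
      | add a b ha hb =>
        simp only [map_add, TensorProduct.add_tmul]; exact Submodule.add_mem _ ha hb
      | tmul a b => exact ⟨a ⊗ₜ (b * c), by simp⟩

end P3
end QG

namespace QG

section P4

variable {k : Type u} [Field k]
variable {C : Type u} [AddCommGroup C] [Module k C] [Coalgebra k C]
variable {V : Type u} [AddCommGroup V] [Module k V]
variable {W : Type u} [AddCommGroup W] [Module k W]
variable {X : Type u} [AddCommGroup X] [Module k X]

lemma slice_fd (t : V ⊗[k] C) : ∃ N : Submodule k V, FiniteDimensional k N ∧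
    ∀ φ : C →ₗ[k] k, slice V φ t ∈ N := by
  induction t with
  | zero => exact ⟨⊥, inferInstance, by simp⟩
  | add a b ha hb =>
    obtain ⟨N, h1, h2⟩ := ha
    obtain ⟨N', h1', h2'⟩ := hb
    refine ⟨N ⊔ N', inferInstance, fun φ => ?_⟩
    rw [map_add]
    exact Submodule.add_mem_sup (h2 φ) (h2' φ)
  | tmul v c =>
    refine ⟨k ∙ v, inferInstance, fun φ => ?_⟩
    rw [slice_tmul]
    exact Submodule.smul_mem _ _ (Submodule.mem_span_singleton_self v)

lemma act_act {ρ : V →ₗ[k] V ⊗[k] C} (hρ : IsComod k C ρ) (φ ψ : C →ₗ[k] k) (v : V) :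
    act ρ ψ (act ρ φ v) =
      act ρ (LinearMap.mul' k k ∘ₗ TensorProduct.map ψ φ ∘ₗ Coalgebra.comul) v := by
  rw [act_apply, act_apply, act_apply, ← slice_rTensor, hρ.coassoc]
  generalize ρ v = t
  induction t with
  | zero => simp
  | add a b ha hb => simp only [map_add, ha, hb]
  | tmul x c =>
    simp only [LinearMap.lTensor_tmul, slice_tmul, LinearMap.comp_apply]
    generalize Coalgebra.comul (R := k) c = s
    induction s with
    | zero => simp
    | add a b ha hb => simp only [map_add, TensorProduct.tmul_add, ha, hb, add_smul]
    | tmul a b => simp [smul_smul, mul_comm]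

lemma simple_fd {ρ : V →ₗ[k] V ⊗[k] C} (hρ : IsComod k C ρ) (hs : IsSimpleComod k C ρ) :
    FiniteDimensional k V := by
  obtain ⟨v, -, hv⟩ := Submodule.exists_mem_ne_zero_of_ne_bot hs.2.1
  obtain ⟨N, hN, hN'⟩ := slice_fd (ρ v)
  let S : Submodule k V := Submodule.span k (Set.range fun φ : C →ₗ[k] k => act ρ φ v)
  have hS : IsSubcomod k C ρ S := by
    rw [isSubcomod_iff]
    intro ψ u hu
    induction hu using Submodule.span_induction with
    | zero => simp
    | add a b _ _ ha hb => rw [map_add]; exact Submodule.add_mem _ ha hb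
    | smul r a _ ha => rw [map_smul]; exact Submodule.smul_mem _ _ ha
    | mem w hw =>
      obtain ⟨φ, rfl⟩ := hw
      exact Submodule.subset_span ⟨_, (act_act hρ φ ψ v).symm⟩
  have hvS : v ∈ S := Submodule.subset_span ⟨Coalgebra.counit, hρ.counit v⟩
  have hSN : S ≤ N := by
    rw [Submodule.span_le]
    rintro _ ⟨φ, rfl⟩
    exact hN' φ
  rcases hs.2.2 S le_top hS with h | h
  · rw [h] at hvS
    exact (hv hvS).elim
  · have : N = ⊤ := top_le_iff.1 (h ▸ hSN)
    subst this
    exact Module.finite_def.2 ((Submodule.fg_top (⊤ : Submodule k V)).1 hN.1)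

lemma cores_isComod {D : Type u} [AddCommGroup D] [Module k D] [Coalgebra k D]
    (π : C →ₗ[k] D) (hπ1 : ∀ c, Coalgebra.counit (R := k) (π c) = Coalgebra.counit (R := k) c)
    (hπ2 : ∀ c, Coalgebra.comul (R := k) (π c) =
      TensorProduct.map π π (Coalgebra.comul (R := k) c))
    {ρ : V →ₗ[k] V ⊗[k] C} (hρ : IsComod k C ρ) : IsComod k D (cores k C π ρ) := by
  constructor
  · intro v
    have h1 : (cores k C π ρ).rTensor D (cores k C π ρ v) =
        TensorProduct.map (π.lTensor V) π (ρ.rTensor C (ρ v)) := by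
      simp only [cores, LinearMap.comp_apply]
      generalize ρ v = t
      induction t with
      | zero => simp
      | add a b ha hb => simp only [map_add, ha, hb]
      | tmul x c => simp
    rw [h1, hρ.coassoc]
    simp only [cores, LinearMap.comp_apply]
    generalize ρ v = t
    induction t with
    | zero => simp
    | add a b ha hb => simp only [map_add, ha, hb]
    | tmul x c =>
      simp only [LinearMap.lTensor_tmul, hπ2]
      generalize Coalgebra.comul (R := k) c = s
      induction s with
      | zero => simp
      | add a b ha hb => simp only [map_add, TensorProduct.tmul_add, ha, hb]
      | tmul a b => simp
  · intro v
    conv_rhs => rw [← hρ.counit v]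
    simp only [cores, LinearMap.comp_apply]
    generalize ρ v = t
    induction t with
    | zero => simp
    | add a b ha hb => simp only [map_add, ha, hb]
    | tmul x c => simp [hπ1]

lemma iso_ne_zero {ρ : V →ₗ[k] V ⊗[k] C} (hs : IsSimpleComod k C ρ) :
    ∃ v : V, v ≠ 0 := by
  obtain ⟨v, -, hv⟩ := Submodule.exists_mem_ne_zero_of_ne_bot hs.2.1
  exact ⟨v, hv⟩

lemma ne_zero_of_iSup {ι : Type u} {Z : ι → Type u} [∀ j, AddCommGroup (Z j)]
    [∀ j, Module k (Z j)] (i : ∀ j, Z j →ₗ[k] V)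
    (h : (⨆ j, LinearMap.range (i j)) = ⊤) {f : V →ₗ[k] W} (hf : f ≠ 0) :
    ∃ j, f ∘ₗ i j ≠ 0 := by
  by_contra! hc
  apply hf
  rw [← LinearMap.ker_eq_top, ← top_le_iff, ← h, iSup_le_iff]
  rintro j _ ⟨z, rfl⟩
  exact LinearMap.congr_fun (hc j) z

lemma exists_inj_of_proj (hC : IsCosemisimple k C) {ρ : V →ₗ[k] V ⊗[k] C} (hρ : IsComod k C ρ)
    {τ : X →ₗ[k] X ⊗[k] C} (hX : IsSimpleComod k C τ)
    {p : V →ₗ[k] X} (hp : p ≠ 0) (hp' : IsComodHom k C ρ τ p) :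
    ∃ f : X →ₗ[k] V, f ≠ 0 ∧ IsComodHom k C τ ρ f := by
  obtain ⟨ι, Y, i, q, hi, hq, hsep, htop, hne, -⟩ := exists_decomp hC hρ
  obtain ⟨j, hj⟩ := ne_zero_of_iSup i htop hp
  obtain ⟨e, he⟩ := schur (Y j).isSimple hX (comodHom_comp hp' (hi j)) hj
  refine ⟨i j ∘ₗ e.symm.toLinearMap, ?_, comodHom_comp (hi j) (comodHom_symm he)⟩
  intro h
  apply hne j
  ext y
  have := LinearMap.congr_fun h (e y)
  simpa using this

lemma exists_comp (hC : IsCosemisimple k C) {ρ : V →ₗ[k] V ⊗[k] C} (hρ : IsComod k C ρ)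
    {τ : X →ₗ[k] X ⊗[k] C} (hX : IsSimpleComod k C τ)
    {f : X →ₗ[k] V} (hf : f ≠ 0) (hf' : IsComodHom k C τ ρ f) :
    ∃ p : V →ₗ[k] X, p ≠ 0 ∧ IsComodHom k C ρ τ p := by
  obtain ⟨ι, Y, i, q, hi, hq, hsep, htop, hne, -⟩ := exists_decomp hC hρ
  obtain ⟨x, hx⟩ : ∃ x, f x ≠ 0 := by
    by_contra! h
    exact hf (LinearMap.ext h)
  obtain ⟨j, hj⟩ : ∃ j, q j (f x) ≠ 0 := by
    by_contra! h
    exact hx (hsep _ h)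
  have hqf : q j ∘ₗ f ≠ 0 := fun h => hj (LinearMap.congr_fun h x)
  obtain ⟨e, he⟩ := schur hX (Y j).isSimple (comodHom_comp (hq j) hf') hqf
  refine ⟨e.symm.toLinearMap ∘ₗ q j, ?_, comodHom_comp (comodHom_symm he) (hq j)⟩
  intro h
  have := LinearMap.congr_fun h (f x)
  simp at this
  exact hj this

lemma comodIsoRel_equiv : Equivalence (comodIsoRel k C) := by
  refine ⟨fun X => ⟨LinearEquiv.refl k _, ?_⟩, ?_, ?_⟩
  · rw [isComodHom_iff]; intro φ v; rfl
  · rintro X Y ⟨e, he⟩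
    exact ⟨e.symm, comodHom_symm he⟩
  · rintro X Y Z ⟨e, he⟩ ⟨e', he'⟩
    exact ⟨e.trans e', comodHom_comp he' he⟩

lemma cls_eq_iff (X Y : SimpleComodule k C) : X.cls = Y.cls ↔ comodIsoRel k C X Y := by
  constructor
  · intro h
    have := Quot.eqvGen_exact h
    rwa [comodIsoRel_equiv.eqvGen_iff] at this
  · exact fun h => Quot.sound h

variable {H B : Type u} [Ring H] [HopfAlgebra k H] [Ring B] [HopfAlgebra k B]

lemma cores_hom (π : H →ₐc[k] B) {ρ : V →ₗ[k] V ⊗[k] H} {σ : W →ₗ[k] W ⊗[k] H}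
    {f : V →ₗ[k] W} (hf : IsComodHom k H ρ σ f) :
    IsComodHom k B (cores k H (π : H →ₗ[k] B) ρ) (cores k H (π : H →ₗ[k] B) σ) f := by
  refine LinearMap.ext fun v => ?_
  have := LinearMap.congr_fun hf v
  simp only [LinearMap.comp_apply, cores] at *
  rw [this]
  generalize ρ v = t
  induction t with
  | zero => simp
  | add a b ha hb => simp only [map_add, ha, hb]
  | tmul x c => simp

lemma cores_comod (π : H →ₐc[k] B) {ρ : V →ₗ[k] V ⊗[k] H} (hρ : IsComod k H ρ) :
    IsComod k B (cores k H (π : H →ₗ[k] B) ρ) := by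
  apply cores_isComod _ _ _ hρ
  · intro c
    exact CoalgHomClass.counit_comp_apply π c
  · intro c
    exact (CoalgHomClass.map_comp_comul_apply π c).symm

lemma comp_ne_zero_iso (e : V ≃ₗ[k] W) {f : W →ₗ[k] X} (hf : f ≠ 0) :
    f ∘ₗ e.toLinearMap ≠ 0 := by
  intro h
  apply hf
  ext x
  have := LinearMap.congr_fun h (e.symm x)
  simpa using this

lemma comp_ne_zero_iso' (e : V ≃ₗ[k] W) {f : X →ₗ[k] V} (hf : f ≠ 0) :
    e.toLinearMap ∘ₗ f ≠ 0 := by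
  intro h
  apply hf
  ext x
  have := LinearMap.congr_fun h x
  simpa using this

/-- Membership of a class in `constHat`. -/
lemma mem_constHat (π : H →ₐc[k] B) (U : SimpleComodule k H) (X : SimpleComodule k B) :
    X.cls ∈ constHat k π U ↔ IsConstituent k B X.ρ (cores k H (π : H →ₗ[k] B) U.ρ) := by
  constructor
  · rintro ⟨Y, hY, f, hf, hf'⟩
    obtain ⟨e, he⟩ := (cls_eq_iff _ _).1 hY.symm
    exact ⟨f ∘ₗ e.toLinearMap, comp_ne_zero_iso e hf, comodHom_comp hf' he⟩
  · exact fun h => ⟨X, rfl, h⟩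

lemma constMap_cls (π : H →ₐc[k] B) (U : SimpleComodule k H) :
    constMap k π U.cls = constHat k π U := by
  ext y
  constructor
  · rintro ⟨U', hU', X, rfl, f, hf, hf'⟩
    obtain ⟨e, he⟩ := (cls_eq_iff _ _).1 hU'
    exact ⟨X, rfl, e.toLinearMap ∘ₗ f, comp_ne_zero_iso' e hf, comodHom_comp (cores_hom π he) hf'⟩
  · exact fun h => ⟨U, rfl, h⟩

lemma constHat_finite (hB : IsCosemisimple k B) (π : H →ₐc[k] B) (U : SimpleComodule k H) :
    (constHat k π U).Finite := by
  have hfd := simple_fd U.isComod U.isSimple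
  obtain ⟨ι, Y, i, q, hi, hq, hsep, htop, hne, hfin⟩ :=
    exists_decomp hB (cores_comod π U.isComod)
  have := hfin hfd
  apply (Set.finite_range fun j => (Y j).cls).subset
  rintro _ ⟨X, rfl, f, hf, hf'⟩
  obtain ⟨x, hx⟩ : ∃ x, f x ≠ 0 := by
    by_contra! h
    exact hf (LinearMap.ext h)
  obtain ⟨j, hj⟩ : ∃ j, q j (f x) ≠ 0 := by
    by_contra! h
    exact hx (hsep _ h)
  have hqf : q j ∘ₗ f ≠ 0 := fun h => hj (LinearMap.congr_fun h x)
  exact ⟨j, ((cls_eq_iff _ _).2 (schur X.isSimple (Y j).isSimple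
    (comodHom_comp (hq j) hf') hqf)).symm⟩

lemma constHat_nonempty (hB : IsCosemisimple k B) (π : H →ₐc[k] B) (U : SimpleComodule k H) :
    ∃ X : SimpleComodule k B, X.cls ∈ constHat k π U := by
  obtain ⟨ι, Y, i, q, hi, hq, hsep, htop, hne, hfin⟩ :=
    exists_decomp hB (cores_comod π U.isComod)
  obtain ⟨v, hv⟩ := iso_ne_zero U.isSimple
  obtain ⟨j, hj⟩ : ∃ j, q j v ≠ 0 := by
    by_contra! h
    exact hv (hsep _ h)
  exact ⟨Y j, (mem_constHat _ _ _).2 ⟨i j, hne j, hi j⟩⟩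

/-- the regular comodule -/
lemma reg_comod : IsComod k C (Coalgebra.comul (R := k) (A := C)) := by
  constructor
  · intro v
    rw [LinearEquiv.coe_coe, LinearEquiv.eq_symm_apply]
    exact Coalgebra.coassoc_apply v
  · intro v
    rw [Coalgebra.lTensor_counit_comul]
    simp

lemma exists_reg {ρ : V →ₗ[k] V ⊗[k] C} (hρ : IsComod k C ρ) (hs : IsSimpleComod k C ρ) :
    ∃ f : V →ₗ[k] C, f ≠ 0 ∧ IsComodHom k C ρ Coalgebra.comul f := by
  obtain ⟨v, hv⟩ := iso_ne_zero hs
  obtain ⟨φ, hφ⟩ : ∃ φ : V →ₗ[k] k, φ v ≠ 0 := by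
    by_contra! h
    exact hv ((Module.forall_dual_apply_eq_zero_iff k v).1 h)
  let f : V →ₗ[k] C := (TensorProduct.lid k C).toLinearMap ∘ₗ φ.rTensor C ∘ₗ ρ
  refine ⟨f, ?_, ?_⟩
  · intro h
    apply hφ
    have h1 : Coalgebra.counit (R := k) (f v) = φ v := by
      conv_rhs => rw [← hρ.counit v]
      simp only [f, LinearMap.comp_apply]
      generalize ρ v = t
      induction t with
      | zero => simp
      | add a b ha hb => simp only [map_add, ha, hb]
      | tmul x c => simp [mul_comm]
    rw [← h1, h]
    simp
  · refine LinearMap.ext fun v => ?_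
    have h1 : f.rTensor C (ρ v) = ((TensorProduct.lid k C).toLinearMap ∘ₗ
        φ.rTensor C).rTensor C (ρ.rTensor C (ρ v)) := by
      rw [← LinearMap.rTensor_comp_apply]
      rfl
    change Coalgebra.comul (R := k) (f v) = f.rTensor C (ρ v)
    rw [h1, hρ.coassoc]
    simp only [f, LinearMap.comp_apply]
    generalize ρ v = t
    induction t with
    | zero => simp
    | add a b ha hb => simp only [map_add, ha, hb]
    | tmul x c =>
      simp only [LinearMap.lTensor_tmul, LinearMap.rTensor_tmul, LinearEquiv.coe_coe,
        TensorProduct.lid_tmul, map_smul]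
      generalize Coalgebra.comul (R := k) c = s
      induction s with
      | zero => simp
      | add a b ha hb => simp only [map_add, TensorProduct.tmul_add, smul_add, ha, hb]
      | tmul a b => simp [TensorProduct.smul_tmul']

/-- every simple `B`-comodule is a constituent of a simple `H`-comodule. -/
lemma exists_const (hH : IsCosemisimple k H) (hB : IsCosemisimple k B) (π : H →ₐc[k] B)
    (hsurj : Function.Surjective π) (X : SimpleComodule k B) :
    ∃ U : SimpleComodule k H, X.cls ∈ constHat k π U := by
  obtain ⟨f, hf, hf'⟩ := exists_reg X.isComod X.isSimple
  obtain ⟨p, hp, hp'⟩ := exists_comp hB reg_comod X.isSimple hf hf'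
  have hπ : IsComodHom k B (cores k H (π : H →ₗ[k] B) Coalgebra.comul) Coalgebra.comul
      (π : H →ₗ[k] B) := by
    refine LinearMap.ext fun h => ?_
    have : Coalgebra.comul (R := k) ((π : H →ₗ[k] B) h) =
      TensorProduct.map (π : H →ₗ[k] B) (π : H →ₗ[k] B) (Coalgebra.comul (R := k) h) :=
      (CoalgHomClass.map_comp_comul_apply π h).symm
    simp only [LinearMap.comp_apply, cores]
    rw [this]
    exact (LinearMap.congr_fun (LinearMap.rTensor_comp_lTensor H (π : H →ₗ[k] B)
      (π : H →ₗ[k] B)) _).symm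
  have hpπ : p ∘ₗ (π : H →ₗ[k] B) ≠ 0 := by
    intro h
    apply hp
    ext b
    obtain ⟨a, rfl⟩ := hsurj b
    exact LinearMap.congr_fun h a
  obtain ⟨ι, Y, i, q, hi, hq, hsep, htop, hne, -⟩ := exists_decomp hH (reg_comod (C := H))
  obtain ⟨j, hj⟩ := ne_zero_of_iSup i htop hpπ
  refine ⟨Y j, (mem_constHat _ _ _).2 ?_⟩
  exact exists_inj_of_proj hB (cores_comod π (Y j).isComod) X.isSimple hj
    (comodHom_comp (comodHom_comp hp' hπ) (cores_hom π (hi j)))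

lemma hom_symm (hB : IsCosemisimple k B) {ρ : V →ₗ[k] V ⊗[k] B} {σ : W →ₗ[k] W ⊗[k] B}
    (hρ : IsComod k B ρ) (hσ : IsComod k B σ) {f : V →ₗ[k] W} (hf : f ≠ 0)
    (hf' : IsComodHom k B ρ σ f) : ∃ g : W →ₗ[k] V, g ≠ 0 ∧ IsComodHom k B σ ρ g := by
  obtain ⟨ι, Y, i, q, hi, hq, hsep, htop, hne, -⟩ := exists_decomp hB hρ
  obtain ⟨j, hj⟩ := ne_zero_of_iSup i htop hf
  obtain ⟨p, hp, hp'⟩ := exists_comp hB hσ (Y j).isSimple hj (comodHom_comp hf' (hi j))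
  refine ⟨i j ∘ₗ p, ?_, comodHom_comp (hi j) hp'⟩
  intro h
  apply hp
  ext w
  apply simple_inj (Y j).isSimple (hi j) (hne j)
  simpa using LinearMap.congr_fun h w

lemma constHat_le {A : Type u} [Ring A] [HopfAlgebra k A] (ι : A →ₐc[k] H) (π : H →ₐc[k] B)
    (hA : LinearMap.range (ι : A →ₗ[k] H) = quotientSpaceLeft k H (π : H →ₗ[k] B))
    (hB : IsCosemisimple k B) (U U' : SimpleComodule k H) {f : U.V →ₗ[k] U'.V} (hf : f ≠ 0)
    (hf' : IsComodHom k B (cores k H (π : H →ₗ[k] B) U.ρ) (cores k H (π : H →ₗ[k] B) U'.ρ) f) :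
    constHat k π U' ⊆ constHat k π U := by
  rintro _ ⟨X, rfl, g, hg, hg'⟩
  rw [mem_constHat]
  obtain ⟨p, hp, hp'⟩ := exists_comp hB (cores_comod π U'.isComod) X.isSimple hg hg'
  have hsub := sum_images ι π hA U.isComod U'.isComod
  rcases U'.isSimple.2.2 _ le_top hsub with h | h
  · exfalso
    apply hf
    ext v
    have : f v ∈ (⊥ : Submodule k U'.V) := by
      rw [← h]
      exact Submodule.subset_span ⟨f, v, hf', rfl⟩
    simpa using this
  · obtain ⟨f', hf1, hf2⟩ : ∃ f' : U.V →ₗ[k] U'.V, IsComodHom k B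
        (cores k H (π : H →ₗ[k] B) U.ρ) (cores k H (π : H →ₗ[k] B) U'.ρ) f' ∧ p ∘ₗ f' ≠ 0 := by
      by_contra! hc
      apply hp
      rw [← LinearMap.ker_eq_top, ← top_le_iff, ← h, Submodule.span_le]
      rintro _ ⟨f', v, hf1, rfl⟩
      exact LinearMap.congr_fun (hc f' hf1) v
    exact exists_inj_of_proj hB (cores_comod π U.isComod) X.isSimple hf2 (comodHom_comp hp' hf1)

lemma constHat_eq {A : Type u} [Ring A] [HopfAlgebra k A] (ι : A →ₐc[k] H) (π : H →ₐc[k] B)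
    (hA : LinearMap.range (ι : A →ₗ[k] H) = quotientSpaceLeft k H (π : H →ₗ[k] B))
    (hB : IsCosemisimple k B) (U U' : SimpleComodule k H) {f : U.V →ₗ[k] U'.V} (hf : f ≠ 0)
    (hf' : IsComodHom k B (cores k H (π : H →ₗ[k] B) U.ρ) (cores k H (π : H →ₗ[k] B) U'.ρ) f) :
    constHat k π U = constHat k π U' := by
  obtain ⟨g, hg, hg'⟩ := hom_symm hB (cores_comod π U.isComod) (cores_comod π U'.isComod) hf hf'
  exact Set.Subset.antisymm (constHat_le ι π hA hB U' U hg hg') (constHat_le ι π hA hB U U' hf hf')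

lemma hom_of_common (π : H →ₐc[k] B) (hB : IsCosemisimple k B) (U U' : SimpleComodule k H)
    (X : SimpleComodule k B) (h : X.cls ∈ constHat k π U) (h' : X.cls ∈ constHat k π U') :
    ∃ f : U.V →ₗ[k] U'.V, f ≠ 0 ∧
      IsComodHom k B (cores k H (π : H →ₗ[k] B) U.ρ) (cores k H (π : H →ₗ[k] B) U'.ρ) f := by
  rw [mem_constHat] at h h'
  obtain ⟨f, hf, hf'⟩ := h
  obtain ⟨g, hg, hg'⟩ := h'
  obtain ⟨p, hp, hp'⟩ := exists_comp hB (cores_comod π U.isComod) X.isSimple hf hf'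
  refine ⟨g ∘ₗ p, ?_, comodHom_comp hg' hp'⟩
  intro h
  apply hp
  ext w
  apply simple_inj X.isSimple hg' hg
  simpa using LinearMap.congr_fun h w

end P4
end QG

open QG in
/-- For an exact sequence `k → A → H → B → k` of cosemisimple
Hopf algebras, the map `Ĥ → {finite subsets of B̂}`, `V ↦ const(V)`, has as
range exactly the equivalence classes of `∼_B`, and its fibers are exactly the
equivalence classes of `∼_H`. -/
theorem statement_12 (k : Type u) [Field k] [IsAlgClosed k]
    (A H B : Type u) [Ring A] [HopfAlgebra k A] [Ring H] [HopfAlgebra k H]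
    [Ring B] [HopfAlgebra k B]
    (ι : A →ₐc[k] H) (π : H →ₐc[k] B)
    (hinj : Function.Injective ι) (hsurj : Function.Surjective π)
    (hexactA : LinearMap.range (ι : A →ₗ[k] H) =
      quotientSpaceLeft k H (π : H →ₗ[k] B))
    (hexactB : LinearMap.ker (π : H →ₗ[k] B) =
      leftIdealGen k (LinearMap.range (ι : A →ₗ[k] H) ⊓
        LinearMap.ker (Coalgebra.counit (R := k) (A := H))))
    (hcssA : IsCosemisimple k A) (hcssH : IsCosemisimple k H)
    (hcssB : IsCosemisimple k B) :
    (∀ x : SimpleComodQuot k H, (constMap k π x).Finite) ∧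
    Set.range (constMap k π) =
      {s : Set (SimpleComodQuot k B) | ∃ z : SimpleComodQuot k B,
        s = {y | relSimB k π z y}} ∧
    (∀ x x' : SimpleComodQuot k H,
      constMap k π x = constMap k π x' ↔ relSimH k π x x') := by
  have hmk : ∀ x : SimpleComodQuot k H, ∃ U : SimpleComodule k H, U.cls = x :=
    fun x => Quot.exists_rep x
  have hmkB : ∀ x : SimpleComodQuot k B, ∃ U : SimpleComodule k B, U.cls = x :=
    fun x => Quot.exists_rep x
  have key : ∀ (U U' : SimpleComodule k H) (X : SimpleComodule k B),
      X.cls ∈ constHat k π U → X.cls ∈ constHat k π U' → constHat k π U = constHat k π U' := by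
    intro U U' X h h'
    obtain ⟨f, hf, hf'⟩ := hom_of_common π hcssB U U' X h h'
    exact constHat_eq ι π hexactA hcssB U U' hf hf'
  have cls : ∀ (U : SimpleComodule k H) (X : SimpleComodule k B),
      X.cls ∈ constHat k π U → constHat k π U = {y | relSimB k π X.cls y} := by
    intro U X h
    ext y
    constructor
    · exact fun hy => ⟨U, h, hy⟩
    · rintro ⟨U', h1, h2⟩
      rwa [key U U' X h h1]
  refine ⟨?_, ?_, ?_⟩
  · intro x
    obtain ⟨U, rfl⟩ := hmk x
    rw [constMap_cls]
    exact constHat_finite hcssB π U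
  · ext s
    constructor
    · rintro ⟨x, rfl⟩
      obtain ⟨U, rfl⟩ := hmk x
      obtain ⟨X, hX⟩ := constHat_nonempty hcssB π U
      exact ⟨X.cls, by rw [constMap_cls, cls U X hX]⟩
    · rintro ⟨z, rfl⟩
      obtain ⟨X, rfl⟩ := hmkB z
      obtain ⟨U, hU⟩ := exists_const hcssH hcssB π hsurj X
      exact ⟨U.cls, by rw [constMap_cls, cls U X hU]⟩
  · intro x x'
    constructor
    · intro h
      obtain ⟨U, rfl⟩ := hmk x
      obtain ⟨U', rfl⟩ := hmk x'
      rw [constMap_cls, constMap_cls] at h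
      obtain ⟨X, hX⟩ := constHat_nonempty hcssB π U
      exact ⟨U, U', rfl, rfl, hom_of_common π hcssB U U' X hX (h ▸ hX)⟩
    · rintro ⟨U, U', rfl, rfl, f, hf, hf'⟩
      rw [constMap_cls, constMap_cls]
      exact constHat_eq ι π hexactA hcssB U U' hf hf'
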